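/- For a two-sided coherent ring R the following are equivalent: (1) R is a left FGF-ring; (2) the left module _RR is noetherian and _RR is an FP-cogenerator; (3) the left module _RR is noetherian and the right module R_R is FP-injective; (4) R is left noetherian, a left Kasch ring, and the injective hull E(_RR) of the left module _RR is flat. -/

import Mathlib

/-!
Common definitions: rings are associative with identity, not necessarily commutative.
Left `R`-modules are `Module R M`; right `R`-modules are `Module Rᵐᵒᵖ M`.
-/

universe u

open MulOpposite Function Pointwise

section Defs

variable (R : Type u) [Ring R]

/-- Defining relations of the tensor product `K ⊗_R M` of a right `R`-module `K`
and a left `R`-module `M`, inside the free abelian group on `K × M`. -/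
def TensorRels (K M : Type u) [AddCommGroup K] [Module Rᵐᵒᵖ K]
    [AddCommGroup M] [Module R M] : AddSubgroup (FreeAbelianGroup (K × M)) :=
  AddSubgroup.closure
    ({x | ∃ k₁ k₂ m, x = FreeAbelianGroup.of (k₁ + k₂, m) - FreeAbelianGroup.of (k₁, m) -
        FreeAbelianGroup.of (k₂, m)} ∪
     {x | ∃ k m₁ m₂, x = FreeAbelianGroup.of (k, m₁ + m₂) - FreeAbelianGroup.of (k, m₁) -
        FreeAbelianGroup.of (k, m₂)} ∪
     {x | ∃ (r : R) (k : K) (m : M),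
        x = FreeAbelianGroup.of (op r • k, m) - FreeAbelianGroup.of (k, r • m)})

/-- The tensor product `K ⊗_R M` of a right `R`-module `K` and a left `R`-module `M`
over the (not necessarily commutative) ring `R`, as an abelian group. -/
def NCTensor (K M : Type u) [AddCommGroup K] [Module Rᵐᵒᵖ K]
    [AddCommGroup M] [Module R M] : Type u :=
  FreeAbelianGroup (K × M) ⧸ TensorRels R K M

instance (K M : Type u) [AddCommGroup K] [Module Rᵐᵒᵖ K] [AddCommGroup M] [Module R M] :
    AddCommGroup (NCTensor R K M) :=
  QuotientAddGroup.Quotient.addCommGroup _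

/-- The map `μ ⊗ ν : K ⊗_R M → K' ⊗_R M'` induced by a map `μ` of right `R`-modules
and a map `ν` of left `R`-modules. -/
def tensorCongr {K K' M M' : Type u} [AddCommGroup K] [Module Rᵐᵒᵖ K]
    [AddCommGroup K'] [Module Rᵐᵒᵖ K'] [AddCommGroup M] [Module R M]
    [AddCommGroup M'] [Module R M'] (μ : K →ₗ[Rᵐᵒᵖ] K') (ν : M →ₗ[R] M') :
    NCTensor R K M →+ NCTensor R K' M' :=
  QuotientAddGroup.map (TensorRels R K M) (TensorRels R K' M')
    (FreeAbelianGroup.lift fun p : K × M => FreeAbelianGroup.of (μ p.1, ν p.2))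
    (by
      refine (AddSubgroup.closure_le _).2 ?_
      rintro x ((⟨k₁, k₂, m, rfl⟩ | ⟨k, m₁, m₂, rfl⟩) | ⟨r, k, m, rfl⟩) <;>
        refine AddSubgroup.mem_comap.2 (AddSubgroup.subset_closure ?_)
      · exact Or.inl <| Or.inl ⟨μ k₁, μ k₂, ν m, by simp [map_add]⟩
      · exact Or.inl <| Or.inr ⟨μ k, ν m₁, ν m₂, by simp [map_add]⟩
      · exact Or.inr ⟨r, μ k, ν m, by simp [map_smul]⟩)

/-- A left `R`-module `M` is flat if `μ ⊗ M` is injective for every injective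
homomorphism `μ` of right `R`-modules. -/
def ModFlat (M : Type u) [AddCommGroup M] [Module R M] : Prop :=
  ∀ (K L : Type u) [AddCommGroup K] [Module Rᵐᵒᵖ K] [AddCommGroup L] [Module Rᵐᵒᵖ L]
    (μ : K →ₗ[Rᵐᵒᵖ] L), Injective μ →
      Injective (tensorCongr R μ (LinearMap.id : M →ₗ[R] M))

/-- A right `R`-module `M` is flat if `M ⊗ μ` is injective for every injective
homomorphism `μ` of left `R`-modules. -/
def ModFlatRight (M : Type u) [AddCommGroup M] [Module Rᵐᵒᵖ M] : Prop :=
  ∀ (K L : Type u) [AddCommGroup K] [Module R K] [AddCommGroup L] [Module R L]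
    (μ : K →ₗ[R] L), Injective μ →
      Injective (tensorCongr R (LinearMap.id : M →ₗ[Rᵐᵒᵖ] M) μ)

/-- A left `R`-module `M` is fp-flat if `μ ⊗ M` is injective for every injective
homomorphism `μ` of finitely presented right `R`-modules. -/
def FpFlat (M : Type u) [AddCommGroup M] [Module R M] : Prop :=
  ∀ (K L : Type u) [AddCommGroup K] [Module Rᵐᵒᵖ K] [AddCommGroup L] [Module Rᵐᵒᵖ L],
    Module.FinitePresentation Rᵐᵒᵖ K → Module.FinitePresentation Rᵐᵒᵖ L →
    ∀ (μ : K →ₗ[Rᵐᵒᵖ] L), Injective μ →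
      Injective (tensorCongr R μ (LinearMap.id : M →ₗ[R] M))

/-- A right `R`-module `M` is fp-flat if `M ⊗ μ` is injective for every injective
homomorphism `μ` of finitely presented left `R`-modules. -/
def FpFlatRight (M : Type u) [AddCommGroup M] [Module Rᵐᵒᵖ M] : Prop :=
  ∀ (K L : Type u) [AddCommGroup K] [Module R K] [AddCommGroup L] [Module R L],
    Module.FinitePresentation R K → Module.FinitePresentation R L →
    ∀ (μ : K →ₗ[R] L), Injective μ →
      Injective (tensorCongr R (LinearMap.id : M →ₗ[Rᵐᵒᵖ] M) μ)

/-- `Ext¹_R(F, M) = 0`. -/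
def ExtVanish (F M : Type u) [AddCommGroup F] [Module R F] [AddCommGroup M] [Module R M] :
    Prop :=
  Subsingleton
    (((Ext ℤ (ModuleCat.{u} R) 1).obj (Opposite.op (ModuleCat.of R F))).obj (ModuleCat.of R M))

/-- A left `R`-module `M` is FP-injective (absolutely pure) if `Ext¹_R(F, M) = 0` for
every finitely presented left `R`-module `F`. -/
def FPInjective (M : Type u) [AddCommGroup M] [Module R M] : Prop :=
  ∀ (F : Type u) [AddCommGroup F] [Module R F], Module.FinitePresentation R F → ExtVanish R F M

/-- A left `R`-module `M` is fp-injective if for every injective homomorphism `μ : K → L`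
of finitely presented left `R`-modules, the induced map `Hom(L, M) → Hom(K, M)` is
surjective. -/
def FpInjective (M : Type u) [AddCommGroup M] [Module R M] : Prop :=
  ∀ (K L : Type u) [AddCommGroup K] [Module R K] [AddCommGroup L] [Module R L],
    Module.FinitePresentation R K → Module.FinitePresentation R L →
    ∀ (μ : K →ₗ[R] L), Injective μ → ∀ f : K →ₗ[R] M, ∃ g : L →ₗ[R] M, g ∘ₗ μ = f

/-- A left `R`-module `K` is an FP-cogenerator if for every nonzero homomorphism
`f : M → N` from a finitely generated module `M` to a finitely presented module `N`
there is `g : N → K` with `g ∘ f ≠ 0`. -/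
def IsFPCogenerator (K : Type u) [AddCommGroup K] [Module R K] : Prop :=
  ∀ (M N : Type u) [AddCommGroup M] [Module R M] [AddCommGroup N] [Module R N],
    Module.Finite R M → Module.FinitePresentation R N →
    ∀ f : M →ₗ[R] N, f ≠ 0 → ∃ g : N →ₗ[R] K, g ∘ₗ f ≠ 0

/-- A left `R`-module `K` is a cogenerator if for every nonzero homomorphism `f : M → N`
of left `R`-modules there is `g : N → K` with `g ∘ f ≠ 0`. -/
def IsCogenerator (K : Type u) [AddCommGroup K] [Module R K] : Prop :=
  ∀ (M N : Type u) [AddCommGroup M] [Module R M] [AddCommGroup N] [Module R N],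
    ∀ f : M →ₗ[R] N, f ≠ 0 → ∃ g : N →ₗ[R] K, g ∘ₗ f ≠ 0

/-- The canonical evaluation map `M → M** = Hom(Hom(M, R), R)` for a left `R`-module `M`;
here `M* = Hom_R(M, R)` is a right `R`-module. -/
def dualEval (M : Type u) [AddCommGroup M] [Module R M] :
    M →ₗ[R] ((M →ₗ[R] R) →ₗ[Rᵐᵒᵖ] R) where
  toFun m :=
    { toFun := fun f => f m
      map_add' := fun f g => rfl
      map_smul' := fun r f => rfl }
  map_add' m m' := LinearMap.ext fun f => f.map_add m m'
  map_smul' r m := LinearMap.ext fun f => by simp [f.map_smul]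

/-- The canonical evaluation map `M → M** = Hom(Hom(M, R), R)` for a right `R`-module `M`;
here `M* = Hom_R(M, R)` is a left `R`-module. -/
def dualEvalRight (M : Type u) [AddCommGroup M] [Module Rᵐᵒᵖ M] :
    M →ₗ[Rᵐᵒᵖ] ((M →ₗ[Rᵐᵒᵖ] R) →ₗ[R] R) where
  toFun m :=
    { toFun := fun f => f m
      map_add' := fun f g => rfl
      map_smul' := fun r f => rfl }
  map_add' m m' := LinearMap.ext fun f => f.map_add m m'
  map_smul' r m := LinearMap.ext fun f => by simp [f.map_smul]

/-- The left annihilator of a subset `X ⊆ R`. -/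
def lAnn (X : Set R) : Set R := {a | ∀ x ∈ X, a * x = 0}

/-- The right annihilator of a subset `X ⊆ R`. -/
def rAnn (X : Set R) : Set R := {a | ∀ x ∈ X, x * a = 0}

/-- `R` is left coherent: every finitely generated left ideal is finitely presented. -/
def LeftCoherent : Prop :=
  ∀ I : Submodule R R, I.FG → Module.FinitePresentation R I

/-- `R` is right coherent: every finitely generated right ideal is finitely presented. -/
def RightCoherent : Prop :=
  ∀ I : Submodule Rᵐᵒᵖ R, I.FG → Module.FinitePresentation Rᵐᵒᵖ I

/-- A left `R`-module `M` embeds in a free left `R`-module. -/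
def EmbedsInFree (M : Type u) [AddCommGroup M] [Module R M] : Prop :=
  ∃ (ι : Type u) (f : M →ₗ[R] (ι →₀ R)), Injective f

/-- A right `R`-module `M` embeds in a free right `R`-module. -/
def EmbedsInFreeRight (M : Type u) [AddCommGroup M] [Module Rᵐᵒᵖ M] : Prop :=
  ∃ (ι : Type u) (f : M →ₗ[Rᵐᵒᵖ] (ι →₀ R)), Injective f

/-- `R` is a left IF-ring: every finitely presented left `R`-module embeds in a free module. -/
def LeftIF : Prop :=
  ∀ (M : Type u) [AddCommGroup M] [Module R M],
    Module.FinitePresentation R M → EmbedsInFree R M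

/-- `R` is a right IF-ring: every finitely presented right `R`-module embeds in a free module. -/
def RightIF : Prop :=
  ∀ (M : Type u) [AddCommGroup M] [Module Rᵐᵒᵖ M],
    Module.FinitePresentation Rᵐᵒᵖ M → EmbedsInFreeRight R M

/-- A module is cyclic if it is generated by one element. -/
def CyclicModule (M : Type u) [AddCommGroup M] [Module R M] : Prop :=
  ∃ m : M, Submodule.span R {m} = ⊤

/-- `R` is a left CF-ring: every cyclic left `R`-module embeds in a free module. -/
def LeftCF : Prop :=
  ∀ (M : Type u) [AddCommGroup M] [Module R M], CyclicModule R M → EmbedsInFree R M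

/-- `R` is a left FGF-ring: every finitely generated left `R`-module embeds in a free module. -/
def LeftFGF : Prop :=
  ∀ (M : Type u) [AddCommGroup M] [Module R M], Module.Finite R M → EmbedsInFree R M

/-- `R` is a left Kasch ring: `Hom_R(M, R) ≠ 0` for every nonzero cyclic left `R`-module. -/
def LeftKasch : Prop :=
  ∀ (M : Type u) [AddCommGroup M] [Module R M],
    CyclicModule R M → Nontrivial M → ∃ f : M →ₗ[R] R, f ≠ 0

/-- `R` is a right Kasch ring: `Hom_R(M, R) ≠ 0` for every nonzero cyclic right `R`-module. -/
def RightKasch : Prop :=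
  ∀ (M : Type u) [AddCommGroup M] [Module Rᵐᵒᵖ M],
    CyclicModule Rᵐᵒᵖ M → Nontrivial M → ∃ f : M →ₗ[Rᵐᵒᵖ] R, f ≠ 0

/-- The socle of a module: the sum of all its simple submodules. -/
def socle (M : Type u) [AddCommGroup M] [Module R M] : Submodule R M :=
  sSup {N : Submodule R M | IsSimpleModule R N}

/-- `R` is left semiartinian: every nonzero cyclic left `R`-module has a nonzero socle. -/
def LeftSemiartinian : Prop :=
  ∀ (M : Type u) [AddCommGroup M] [Module R M],
    CyclicModule R M → Nontrivial M → socle R M ≠ ⊥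

/-- A submodule `N ⊆ M` is essential if it meets every nonzero submodule nontrivially. -/
def EssentialSub {M : Type u} [AddCommGroup M] [Module R M] (N : Submodule R M) : Prop :=
  ∀ P : Submodule R M, P ≠ ⊥ → N ⊓ P ≠ ⊥

/-- `R` is semiregular: `R/rad R` is von Neumann regular,
where `rad R` is the Jacobson radical. -/
def Semiregular : Prop :=
  ∀ a : R, ∃ x : R, a - a * x * a ∈ Ideal.jacobson (⊥ : Ideal R)

/-- `R` is semiperfect: `R/rad R` is semisimple and idempotents lift modulo `rad R`. -/
def Semiperfect : Prop :=
  IsSemisimpleModule R (R ⧸ Ideal.jacobson (⊥ : Ideal R)) ∧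
    ∀ a : R, a * a - a ∈ Ideal.jacobson (⊥ : Ideal R) →
      ∃ e : R, e * e = e ∧ e - a ∈ Ideal.jacobson (⊥ : Ideal R)

/-- A module is indecomposable if it is nonzero and is not the direct sum of two
nonzero submodules. -/
def IndecModule (M : Type u) [AddCommGroup M] [Module R M] : Prop :=
  Nontrivial M ∧ ∀ A B : Submodule R M, IsCompl A B → A = ⊥ ∨ B = ⊥

/-- `R` is weakly quasi-Frobenius: left and right coherent and left and right FP-injective. -/
def WQF : Prop :=
  LeftCoherent R ∧ RightCoherent R ∧ FPInjective R R ∧ FPInjective Rᵐᵒᵖ R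

/-- `R` is quasi-Frobenius: left and right noetherian and left and right self-injective. -/
def QF : Prop :=
  IsNoetherianRing R ∧ IsNoetherian Rᵐᵒᵖ R ∧ Module.Injective R R ∧ Module.Injective Rᵐᵒᵖ R

end Defs

/-- A group is locally finite if every finitely generated subgroup is finite. -/
def LocallyFiniteGroup (G : Type*) [Group G] : Prop :=
  ∀ H : Subgroup G, H.FG → Finite H

open CategoryTheory in
theorem exact_res {S : Type u} [Ring S] {F M : ModuleCat.{u} S} (P : ProjectiveResolution F) :
    Subsingleton (((Ext ℤ (ModuleCat.{u} S) 1).obj (Opposite.op F)).obj M) ↔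
    ∀ c : P.complex.X 1 ⟶ M, P.complex.d 2 1 ≫ c = 0 → ∃ h : P.complex.X 0 ⟶ M,
      P.complex.d 1 0 ≫ h = c := by
  rw [← ModuleCat.isZero_iff_subsingleton, (P.isoExt (R := ℤ) 1 M).isZero_iff,
    ← HomologicalComplex.exactAt_iff_isZero_homology,
    HomologicalComplex.exactAt_iff' _ 0 1 2 (by simp) (by simp),
    ShortComplex.moduleCat_exact_iff]
  rfl

/-- extension property along a surjection `p`. -/
def ExtProp (S : Type u) [Ring S] {P F : Type u} (M : Type u) [AddCommGroup P] [Module S P]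
    [AddCommGroup F] [Module S F] [AddCommGroup M] [Module S M] (p : P →ₗ[S] F) : Prop :=
  ∀ f : LinearMap.ker p →ₗ[S] M, ∃ g : P →ₗ[S] M, ∀ x : LinearMap.ker p, g x = f x

theorem ExtProp.transfer {S : Type u} [Ring S] {P Q F M : Type u} [AddCommGroup P] [Module S P]
    [AddCommGroup Q] [Module S Q]
    [AddCommGroup F] [Module S F] [AddCommGroup M] [Module S M] (p : P →ₗ[S] F) (q : Q →ₗ[S] F)
    [Module.Projective S P] [Module.Projective S Q] (hp : Surjective p) (hq : Surjective q)
    (H : ExtProp S M p) : ExtProp S M q := by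
  intro f
  obtain ⟨s, hs⟩ := Module.projective_lifting_property q p hq
  obtain ⟨t, ht⟩ := Module.projective_lifting_property p q hp
  have hs' : ∀ x, q (s x) = p x := fun x => LinearMap.congr_fun hs x
  have ht' : ∀ x, p (t x) = q x := fun x => LinearMap.congr_fun ht x
  let sK : LinearMap.ker p →ₗ[S] LinearMap.ker q :=
    (s ∘ₗ (LinearMap.ker p).subtype).codRestrict _ (fun x => by simp [hs'])
  obtain ⟨g, hg⟩ := H (f ∘ₗ sK)
  let d : Q →ₗ[S] LinearMap.ker q :=
    (LinearMap.id - s ∘ₗ t).codRestrict _ (fun x => by simp [hs', ht'])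
  refine ⟨g ∘ₗ t + f ∘ₗ d, fun x => ?_⟩
  have h1 : g (t x) = f (sK ⟨t x, by simp [ht']⟩) := hg ⟨t x, by simp [ht']⟩
  simp only [LinearMap.add_apply, LinearMap.comp_apply, h1]
  rw [← map_add]
  congr 1
  ext
  change s (t x) + ((x : Q) - s (t x)) = x
  abel

open CategoryTheory in
theorem extVanish_iff_res {S : Type u} [Ring S] {F M : ModuleCat.{u} S}
    (P : ProjectiveResolution F) :
    ∃ p : P.complex.X 0 →ₗ[S] F, Surjective p ∧
    (Subsingleton (((Ext ℤ (ModuleCat.{u} S) 1).obj (Opposite.op F)).obj M) ↔ ExtProp S M p) := by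
  rw [exact_res P]
  have e0 := P.exact₀
  have e1 := P.exact_succ 0
  rw [ShortComplex.moduleCat_exact_iff] at e0 e1
  have hsurj : Surjective (P.π.f 0).hom := (ModuleCat.epi_iff_surjective _).1 inferInstance
  let e : ((ChainComplex.single₀ (ModuleCat.{u} S)).obj F).X 0 ≃ₗ[S] F :=
    (HomologicalComplex.singleObjXSelf (ComplexShape.down ℕ) 0 F).toLinearEquiv
  let p : P.complex.X 0 →ₗ[S] F := e.toLinearMap ∘ₗ (P.π.f 0).hom
  have hp : Surjective p := e.surjective.comp hsurj
  have hd : ∀ x, p ((P.complex.d 1 0).hom x) = 0 := by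
    intro x
    have := P.complex_d_comp_π_f_zero
    have h2 := congrArg (fun f => f.hom x) this
    change e ((P.π.f 0).hom ((P.complex.d 1 0).hom x)) = 0
    change (P.π.f 0).hom ((P.complex.d 1 0).hom x) = 0 at h2
    rw [h2, map_zero]
  have e0' : ∀ x, p x = 0 → ∃ y, (P.complex.d 1 0).hom y = x := by
    intro x hx
    exact e0 x (e.map_eq_zero_iff.1 hx)
  have hdd : ∀ x, (P.complex.d 1 0).hom ((P.complex.d 2 1).hom x) = 0 := by
    intro x
    exact congrArg (fun f => f.hom x) (P.complex.d_comp_d 2 1 0)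
  let D : P.complex.X 1 →ₗ[S] LinearMap.ker p := (P.complex.d 1 0).hom.codRestrict _ (by simpa using hd)
  have hD : Surjective D := by
    rintro ⟨x, hx⟩
    obtain ⟨y, hy⟩ := e0' x hx
    exact ⟨y, Subtype.ext hy⟩
  refine ⟨p, hp, ?_, ?_⟩
  · intro H f
    obtain ⟨h, hh⟩ := H (ModuleCat.ofHom (f ∘ₗ D)) (by
      ext x
      change f (D _) = 0
      have : D ((P.complex.d 2 1).hom x) = 0 := Subtype.ext (hdd x)
      exact (congrArg f this).trans (map_zero f))
    refine ⟨h.hom, fun x => ?_⟩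
    obtain ⟨y, rfl⟩ := hD x
    exact congrArg (fun f => f.hom y) hh
  · intro H' c hc
    have hker : LinearMap.ker D ≤ LinearMap.ker c.hom := by
      intro x hx
      obtain ⟨y, hy⟩ := e1 x (congrArg Subtype.val (LinearMap.mem_ker.1 hx))
      have : c.hom ((P.complex.d 2 1).hom y) = 0 := congrArg (fun f => f.hom y) hc
      change (P.complex.d 2 1).hom y = x at hy
      rw [hy] at this
      exact this
    let E := D.quotKerEquivOfSurjective hD
    obtain ⟨g, hg⟩ := H' ((LinearMap.ker D).liftQ c.hom hker ∘ₗ E.symm.toLinearMap)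
    refine ⟨ModuleCat.ofHom g, ?_⟩
    ext x
    have h1 := hg (D x)
    have h2 : E.symm (D x) = Submodule.Quotient.mk x := by
      rw [LinearEquiv.symm_apply_eq]; rfl
    simp only [LinearMap.comp_apply, LinearEquiv.coe_coe, h2] at h1
    exact h1

theorem extVanish_iff {S : Type u} [Ring S] {P F M : Type u} [AddCommGroup P] [Module S P]
    [AddCommGroup F] [Module S F] [AddCommGroup M] [Module S M] (p : P →ₗ[S] F)
    [Module.Projective S P] (hp : Surjective p) : ExtVanish S F M ↔ ExtProp S M p := by
  let Q := CategoryTheory.projectiveResolution (ModuleCat.of S F)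
  have pr : Module.Projective S (Q.complex.X 0) :=
      (IsProjective.iff_projective _).2 (Q.projective 0)
  obtain ⟨q, hq, H⟩ := extVanish_iff_res (M := ModuleCat.of S M) Q
  exact H.trans ⟨fun H => ExtProp.transfer (F := F) q p hq hp H,
    fun H => ExtProp.transfer p q hp hq H⟩

theorem exists_factor {S : Type*} [Ring S] {P N X : Type*} [AddCommGroup P] [Module S P]
    [AddCommGroup N] [Module S N] [AddCommGroup X] [Module S X] (π : P →ₗ[S] N)
    (hπ : Surjective π) (φ : P →ₗ[S] X) (h : LinearMap.ker π ≤ LinearMap.ker φ) :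
    ∃ g : N →ₗ[S] X, ∀ v, g (π v) = φ v := by
  refine ⟨(LinearMap.ker π).liftQ φ h ∘ₗ (π.quotKerEquivOfSurjective hπ).symm.toLinearMap,
    fun v => ?_⟩
  have h2 : (π.quotKerEquivOfSurjective hπ).symm (π v) = Submodule.Quotient.mk v := by
    rw [LinearEquiv.symm_apply_eq]; rfl
  simp only [LinearMap.comp_apply, LinearEquiv.coe_coe, h2]
  rfl

/-- every finitely generated submodule is finitely presented -/
def Coh (S : Type*) [Ring S] (X : Type*) [AddCommGroup X] [Module S X] : Prop :=
  ∀ N : Submodule S X, N.FG → Module.FinitePresentation S N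

theorem Coh.fp {S : Type*} [Ring S] {X Y : Type*} [AddCommGroup X] [Module S X]
    [AddCommGroup Y] [Module S Y] (hX : Coh S X) (j : Y →ₗ[S] X) (hj : Injective j)
    (hY : Module.Finite S Y) : Module.FinitePresentation S Y := by
  have : Module.FinitePresentation S (LinearMap.range j) :=
    hX _ (by rw [LinearMap.range_eq_map]; exact hY.fg_top.map j)
  exact Module.FinitePresentation.of_equiv (LinearEquiv.ofInjective j hj).symm

theorem Coh.prod {S : Type*} [Ring S] {X Y Z : Type*} [AddCommGroup X] [Module S X]
    [AddCommGroup Y] [Module S Y] [AddCommGroup Z] [Module S Z] (hX : Coh S X) (hY : Coh S Y)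
    (p : Z →ₗ[S] X) (q : Z →ₗ[S] Y) (h : ∀ z, p z = 0 → q z = 0 → z = 0) : Coh S Z := by
  intro N hN
  have hfin : Module.Finite S N := Module.Finite.iff_fg.2 hN
  let l : N →ₗ[S] LinearMap.range (p ∘ₗ N.subtype) := (p ∘ₗ N.subtype).rangeRestrict
  have hl : Surjective l := LinearMap.surjective_rangeRestrict _
  have h1 : Module.FinitePresentation S (LinearMap.range (p ∘ₗ N.subtype)) :=
    hX _ (by rw [LinearMap.range_eq_map]; exact hfin.fg_top.map _)
  have h2 : Module.Finite S (LinearMap.ker l) :=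
    Module.Finite.iff_fg.2 (Module.FinitePresentation.fg_ker l hl)
  have h3 : Module.FinitePresentation S (LinearMap.ker l) := by
    refine hY.fp (q ∘ₗ N.subtype ∘ₗ (LinearMap.ker l).subtype) ?_ h2
    rw [injective_iff_map_eq_zero]
    rintro ⟨⟨z, hz⟩, hz2⟩ hz3
    have : z = 0 := h z (congrArg Subtype.val (LinearMap.mem_ker.1 hz2)) hz3
    subst this
    rfl
  exact Module.finitePresentation_of_ker l hl

theorem Coh.pi {S : Type*} [Ring S] {X : Type*} [AddCommGroup X] [Module S X] (hX : Coh S X)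
    (n : ℕ) : Coh S (Fin n → X) := by
  induction n with
  | zero => 
    intro N hN
    have : N = ⊥ := Subsingleton.elim _ _
    subst this
    exact Module.finitePresentation_of_projective _ _
  | succ n ih =>
    refine hX.prod ih (LinearMap.proj 0) (LinearMap.funLeft S X Fin.succ) ?_
    intro z h1 h2
    funext i
    refine Fin.cases h1 (fun i => congrFun h2 i) i

theorem Coh.fg_ker {S : Type*} [Ring S] {X Y : Type*} [AddCommGroup X] [Module S X]
    [AddCommGroup Y] [Module S Y] (hX : Coh S X) (hY : Module.Finite S Y) (j : Y →ₗ[S] X) :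
    (LinearMap.ker j).FG := by
  have : Module.FinitePresentation S (LinearMap.range j) :=
    hX _ (by rw [LinearMap.range_eq_map]; exact hY.fg_top.map j)
  have := Module.FinitePresentation.fg_ker j.rangeRestrict (LinearMap.surjective_rangeRestrict _)
  rwa [LinearMap.ker_rangeRestrict] at this

section Mat

variable {R : Type u} [Ring R]

def dotR {n : ℕ} (c : Fin n → R) : (Fin n → R) →ₗ[Rᵐᵒᵖ] R where
  toFun y := ∑ i, c i * y i
  map_add' x y := by simp [mul_add, Finset.sum_add_distrib]
  map_smul' r y := by simp [Finset.sum_mul, mul_assoc]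

def mulR {m n : ℕ} (a : Fin n → Fin m → R) : (Fin m → R) →ₗ[Rᵐᵒᵖ] (Fin n → R) :=
  LinearMap.pi fun i => dotR (a i)

def dotL {n : ℕ} (x : Fin n → R) : (Fin n → R) →ₗ[R] R where
  toFun v := ∑ i, v i * x i
  map_add' x y := by simp [add_mul, Finset.sum_add_distrib]
  map_smul' r y := by simp [Finset.mul_sum, mul_assoc]

theorem right_expand {n : ℕ} (x : Fin n → R) :
    x = ∑ j, op (x j) • (Pi.single j 1 : Fin n → R) := by
  funext i
  simp [Finset.sum_apply, Pi.single_apply]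

theorem left_expand {n : ℕ} (x : Fin n → R) :
    x = ∑ j, x j • (Pi.single j 1 : Fin n → R) := by
  funext i
  simp [Finset.sum_apply, Pi.single_apply]

theorem right_lin {n : ℕ} {X : Type*} [AddCommGroup X] [Module Rᵐᵒᵖ X]
    (h : (Fin n → R) →ₗ[Rᵐᵒᵖ] X) (x : Fin n → R) :
    h x = ∑ j, op (x j) • h (Pi.single j 1) := by
  conv_lhs => rw [right_expand x]
  simp only [map_sum, map_smul]

theorem left_lin {n : ℕ} {X : Type*} [AddCommGroup X] [Module R X]
    (h : (Fin n → R) →ₗ[R] X) (x : Fin n → R) :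
    h x = ∑ j, x j • h (Pi.single j 1) := by
  conv_lhs => rw [left_expand x]
  simp only [map_sum, map_smul]

variable (R)

def opEquiv : Rᵐᵒᵖ ≃ₗ[Rᵐᵒᵖ] R where
  toFun := unop
  invFun := op
  map_add' _ _ := rfl
  map_smul' _ _ := rfl
  left_inv _ := rfl
  right_inv _ := rfl

def opPi (n : ℕ) : (Fin n → Rᵐᵒᵖ) ≃ₗ[Rᵐᵒᵖ] (Fin n → R) :=
  LinearEquiv.piCongrRight fun _ => opEquiv R

instance projPi (n : ℕ) : Module.Projective Rᵐᵒᵖ (Fin n → R) :=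
  Module.Projective.of_equiv (opPi R n)

instance finPi (n : ℕ) : Module.Finite Rᵐᵒᵖ (Fin n → R) :=
  Module.Finite.equiv (opPi R n)

def MatT : Prop := ∀ (m n : ℕ) (a : Fin n → Fin m → R) (v : Fin m → R),
  (∀ x : Fin m → R, mulR a x = 0 → dotL x v = 0) → v ∈ Submodule.span R (Set.range a)

theorem matT_of_cogen (H : ∀ (m n : ℕ) (a : Fin n → Fin m → R) (v : Fin m → R),
    v ∉ Submodule.span R (Set.range a) → ∃ g : (Fin m → R) →ₗ[R] R, (∀ i, g (a i) = 0) ∧ g v ≠ 0) :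
    MatT R := by
  intro m n a v hv
  by_contra hc
  obtain ⟨g, hg, hgv⟩ := H m n a v hc
  apply hgv
  have key : ∀ w, g w = dotL (fun j => g (Pi.single j 1)) w := fun w => left_lin g w
  rw [key]
  apply hv
  funext i
  exact (key (a i)).symm.trans (hg i)

theorem matT_of_fpcogen (H : IsFPCogenerator R R) : MatT R := by
  apply matT_of_cogen
  intro m n a v hv
  set K := Submodule.span R (Set.range a) with hK
  have hfp : Module.FinitePresentation R ((Fin m → R) ⧸ K) :=
    Module.finitePresentation_of_surjective K.mkQ K.mkQ_surjective
      (by rw [Submodule.ker_mkQ]; exact Submodule.fg_span (Set.finite_range a))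
  obtain ⟨g, hg⟩ := H R _ inferInstance hfp (LinearMap.toSpanSingleton R _ (K.mkQ v)) (by
    intro h
    apply hv
    have := LinearMap.congr_fun h 1
    simpa using this)
  refine ⟨g ∘ₗ K.mkQ, fun i => ?_, fun h => hg ?_⟩
  · have : K.mkQ (a i) = 0 := by
      simpa using Submodule.subset_span (Set.mem_range_self i)
    simp only [LinearMap.comp_apply, this, map_zero]
  · ext
    simpa using h

theorem exists_pres (N : Type u) [AddCommGroup N] [Module R N]
    (hN : Module.FinitePresentation R N) :
    ∃ (m n : ℕ) (a : Fin n → Fin m → R) (π : (Fin m → R) →ₗ[R] N), Surjective π ∧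
      LinearMap.ker π = Submodule.span R (Set.range a) := by
  obtain ⟨m, n, π, g, hπ, he⟩ := Module.FinitePresentation.exists_fin' R N
  refine ⟨m, n, fun i => g (Pi.single i 1), π, hπ, ?_⟩
  rw [LinearMap.exact_iff.1 he]
  apply le_antisymm
  · rintro _ ⟨x, rfl⟩
    rw [left_lin g x]
    exact Submodule.sum_mem _ fun i _ => Submodule.smul_mem _ _
      (Submodule.subset_span ⟨i, rfl⟩)
  · rw [Submodule.span_le]
    rintro _ ⟨i, rfl⟩
    exact ⟨_, rfl⟩

variable {R}

theorem dotL_zero_of_span {m n : ℕ} {a : Fin n → Fin m → R} {x : Fin m → R}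
    (hx : mulR a x = 0) : Submodule.span R (Set.range a) ≤ LinearMap.ker (dotL x) := by
  rw [Submodule.span_le]
  rintro _ ⟨i, rfl⟩
  exact congrFun hx i

theorem fpcogen_of_matT (H : MatT R) : IsFPCogenerator R R := by
  intro M N _ _ _ _ _ hN f hf
  obtain ⟨m, n, a, π, hπ, hk⟩ := exists_pres R N hN
  obtain ⟨z, hz⟩ : ∃ z, f z ≠ 0 := by
    by_contra! h
    exact hf (LinearMap.ext h)
  obtain ⟨v, hv⟩ := hπ (f z)
  have : v ∉ Submodule.span R (Set.range a) := by
    rw [← hk, LinearMap.mem_ker, hv]; exact hz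
  have h2 := mt (H m n a v) this
  push Not at h2
  obtain ⟨x, hx, hxv⟩ := h2
  obtain ⟨g, hg⟩ := exists_factor π hπ (dotL x) (hk ▸ dotL_zero_of_span hx)
  refine ⟨g, fun h => hxv ?_⟩
  rw [← hg, hv]
  exact LinearMap.congr_fun h z

theorem matT_of_fpinj (H : FPInjective Rᵐᵒᵖ R) : MatT R := by
  intro m n a v hv
  let A := mulR a
  let p := (LinearMap.range A).mkQ
  have hfp : Module.FinitePresentation Rᵐᵒᵖ ((Fin n → R) ⧸ LinearMap.range A) := by
    have : Module.FinitePresentation Rᵐᵒᵖ (Fin n → R) :=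
      Module.finitePresentation_of_projective _ _
    refine Module.finitePresentation_of_surjective p (Submodule.mkQ_surjective _) ?_
    rw [Submodule.ker_mkQ, LinearMap.range_eq_map]
    exact (finPi R m).fg_top.map A
  have hE := (extVanish_iff p (Submodule.mkQ_surjective _)).1 (H _ hfp)
  let A' : (Fin m → R) →ₗ[Rᵐᵒᵖ] LinearMap.ker p := A.codRestrict _ (fun x => by simp [p])
  have hA' : Surjective A' := by
    rintro ⟨y, hy⟩
    have : y ∈ LinearMap.range A := by simpa [p] using hy
    obtain ⟨x, rfl⟩ := this
    exact ⟨x, rfl⟩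
  obtain ⟨f, hf⟩ := exists_factor A' hA' (dotR v) (by
    intro x hx
    exact hv x (congrArg Subtype.val (LinearMap.mem_ker.1 hx)))
  obtain ⟨g, hg⟩ := hE f
  have : v = ∑ i, g (Pi.single i 1) • a i := by
    funext j
    have h1 : dotR v (Pi.single j 1) = v j := by simp [dotR, Pi.single_apply]
    have h2 : g (A (Pi.single j 1)) = v j := by
      rw [← h1, ← hf]; exact hg (A' _)
    rw [← h2, right_lin g]
    simp [A, mulR, dotR, Pi.single_apply, Finset.sum_apply]
  rw [this]
  exact Submodule.sum_mem _ fun i _ => Submodule.smul_mem _ _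
      (Submodule.subset_span ⟨i, rfl⟩)

theorem fpinj_of_matT (H : MatT R) : FPInjective Rᵐᵒᵖ R := by
  intro F _ _ hF
  obtain ⟨n, m, p', A', hp', he⟩ := Module.FinitePresentation.exists_fin' Rᵐᵒᵖ F
  let p : (Fin n → R) →ₗ[Rᵐᵒᵖ] F := p' ∘ₗ (opPi R n).symm.toLinearMap
  let A : (Fin m → R) →ₗ[Rᵐᵒᵖ] (Fin n → R) :=
    (opPi R n).toLinearMap ∘ₗ A' ∘ₗ (opPi R m).symm.toLinearMap
  have hp : Surjective p := hp'.comp (opPi R n).symm.surjective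
  have hpA : ∀ x, p (A x) = 0 := fun x => by
    simp [p, A, he.apply_apply_eq_zero]
  have hker : ∀ y, p y = 0 → ∃ x, A x = y := by
    intro y hy
    obtain ⟨z, hz⟩ := (he _).1 hy
    refine ⟨opPi R m z, ?_⟩
    simp [A, hz]
  refine (extVanish_iff p hp).2 fun f => ?_
  let B : (Fin m → R) →ₗ[Rᵐᵒᵖ] LinearMap.ker p := A.codRestrict _ (fun x => hpA x)
  have hA : mulR (fun i j => A (Pi.single j 1) i) = A := by
    refine LinearMap.ext fun x => ?_
    rw [right_lin A]
    funext i
    simp [mulR, dotR, Finset.sum_apply]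
  have hspan := H m n (fun i j => A (Pi.single j 1) i) (fun j => f (B (Pi.single j 1))) (by
    intro x hx
    rw [hA] at hx
    have hB : B x = 0 := Subtype.ext hx
    have := right_lin (f ∘ₗ B) x
    rw [LinearMap.comp_apply, hB, map_zero] at this
    rw [this]
    simp [dotL])
  obtain ⟨c, hc⟩ := (Submodule.mem_span_range_iff_exists_fun R).1 hspan
  refine ⟨dotR c, ?_⟩
  rintro ⟨y, hy⟩
  obtain ⟨x, rfl⟩ := hker y hy
  change dotR c (A x) = f (B x)
  rw [← LinearMap.comp_apply, ← LinearMap.comp_apply, right_lin (dotR c ∘ₗ A),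
    right_lin (f ∘ₗ B)]
  refine Finset.sum_congr rfl fun j _ => ?_
  congr 1
  have := congrFun hc j
  simpa [dotR, Finset.sum_apply] using this

theorem fgf_of_matT (hn : IsNoetherianRing R) (hr : RightCoherent R) (H : MatT R) : LeftFGF R := by
  intro M _ _ hM
  obtain ⟨m, n, a, π, hπ, hk⟩ := exists_pres R M (Module.finitePresentation_of_finite R M)
  have hC : Coh Rᵐᵒᵖ (Fin n → R) := Coh.pi hr n
  obtain ⟨s, hs⟩ := hC.fg_ker (finPi R m) (mulR a)
  let φ : (Fin m → R) →ₗ[R] (s →₀ R) :=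
    (Finsupp.linearEquivFunOnFinite R R s).symm.toLinearMap ∘ₗ LinearMap.pi fun x => dotL x.1
  have hφ : ∀ v x, φ v x = dotL x.1 v := fun v x => rfl
  obtain ⟨g, hg⟩ := exists_factor π hπ φ (by
    rw [hk]
    intro v hv
    rw [LinearMap.mem_ker]
    ext x
    rw [hφ]
    refine dotL_zero_of_span (a := a) ?_ hv
    rw [← LinearMap.mem_ker, ← hs]
    exact Submodule.subset_span x.2)
  refine ⟨s, g, ?_⟩
  rw [injective_iff_map_eq_zero]
  intro z hz
  obtain ⟨v, rfl⟩ := hπ z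
  rw [hg] at hz
  rw [← LinearMap.mem_ker, hk]
  apply H
  intro x hx
  have : Submodule.span Rᵐᵒᵖ (s : Set (Fin m → R)) ≤ LinearMap.ker (dotR v) := by
    rw [Submodule.span_le]
    intro y hy
    exact DFunLike.congr_fun hz (⟨y, hy⟩ : s)
  rw [hs] at this
  exact this hx

/-- FGF modules embed in finite free modules -/
theorem fin_embed {M : Type u} [AddCommGroup M] [Module R M] (hM : Module.Finite R M)
    (h : EmbedsInFree R M) : ∃ (n : ℕ) (f : M →ₗ[R] (Fin n → R)), Injective f := by
  classical
  obtain ⟨ι, f, hf⟩ := h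
  obtain ⟨s, hs⟩ := hM.fg_top
  let t : Finset ι := s.biUnion fun m => (f m).support
  have ht : ∀ m : M, ∀ i, i ∉ t → f m i = 0 := by
    intro m i hi
    have : Submodule.span R (s : Set M) ≤ LinearMap.ker (Finsupp.lapply i ∘ₗ f) := by
      rw [Submodule.span_le]
      intro y hy
      by_contra hne
      apply hi
      exact Finset.mem_biUnion.2 ⟨y, hy, Finsupp.mem_support_iff.2 hne⟩
    rw [hs] at this
    exact this (Submodule.mem_top : m ∈ ⊤)
  refine ⟨t.card, LinearMap.pi fun k => Finsupp.lapply (t.equivFin.symm k).1 ∘ₗ f, ?_⟩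
  rw [injective_iff_map_eq_zero]
  intro m hm
  apply hf
  rw [map_zero]
  ext i
  by_cases hi : i ∈ t
  · have := congrFun hm (t.equivFin ⟨i, hi⟩)
    simpa using this
  · exact ht m i hi

theorem noeth_of_fgf (hl : LeftCoherent R) (H : LeftFGF R) : IsNoetherianRing R := by
  rw [isNoetherianRing_iff_ideal_fg]
  intro I
  have hfin : Module.Finite R (R ⧸ I) := inferInstance
  obtain ⟨n, f, hf⟩ := fin_embed hfin (H _ hfin)
  have hC : Coh R (Fin n → R) := Coh.pi hl n
  have := hC.fp f hf hfin
  have h2 := Module.FinitePresentation.fg_ker I.mkQ I.mkQ_surjective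
  rwa [Submodule.ker_mkQ] at h2

theorem cogen_of_fgf (H : LeftFGF R) : IsFPCogenerator R R := by
  intro M N _ _ _ _ _ hN f hf
  obtain ⟨ι, g, hg⟩ := H N inferInstance
  by_contra! hc
  apply hf
  ext x
  apply hg
  simp only [LinearMap.zero_apply, map_zero]
  ext i
  exact LinearMap.congr_fun (hc (Finsupp.lapply i ∘ₗ g)) x

theorem kasch_of_cogen (hn : IsNoetherianRing R) (H : IsFPCogenerator R R) : LeftKasch R := by
  rintro M _ _ ⟨m, hm⟩ hnt
  have hfin : Module.Finite R M := ⟨⟨{m}, by simpa using hm⟩⟩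
  obtain ⟨g, hg⟩ := H M M hfin (Module.finitePresentation_of_finite R M) LinearMap.id (by
    obtain ⟨x, hx⟩ := exists_ne (0 : M)
    intro h
    exact hx (LinearMap.congr_fun h x))
  exact ⟨g, hg⟩

end Mat

section Tensor

variable {R : Type u} [Ring R] {K L M X : Type u} [AddCommGroup K] [Module Rᵐᵒᵖ K]
  [AddCommGroup L] [Module Rᵐᵒᵖ L] [AddCommGroup M] [Module R M] [AddCommGroup X] [Module R X]

variable (R) in
def ncMk : FreeAbelianGroup (K × M) →+ NCTensor R K M :=
  QuotientAddGroup.mk' (TensorRels R K M)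

variable (R) in
def tm (k : K) (m : M) : NCTensor R K M := ncMk R (FreeAbelianGroup.of (k, m))

theorem ncMk_surj : Surjective (ncMk R : FreeAbelianGroup (K × M) →+ NCTensor R K M) :=
  QuotientAddGroup.mk'_surjective _

theorem ncMk_eq_zero {x : FreeAbelianGroup (K × M)} : ncMk R x = 0 ↔ x ∈ TensorRels R K M :=
  QuotientAddGroup.eq_zero_iff x

theorem tm_add_left (k₁ k₂ : K) (m : M) : tm R (k₁ + k₂) m = tm R k₁ m + tm R k₂ m := by
  have : ncMk R (FreeAbelianGroup.of (k₁ + k₂, m) - FreeAbelianGroup.of (k₁, m) -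
        FreeAbelianGroup.of (k₂, m)) = 0 :=
    ncMk_eq_zero.2 (AddSubgroup.subset_closure (Or.inl <| Or.inl ⟨k₁, k₂, m, rfl⟩))
  rw [map_sub, map_sub, sub_sub, sub_eq_zero] at this
  exact this

theorem tm_add_right (k : K) (m₁ m₂ : M) : tm R k (m₁ + m₂) = tm R k m₁ + tm R k m₂ := by
  have : ncMk R (FreeAbelianGroup.of (k, m₁ + m₂) - FreeAbelianGroup.of (k, m₁) -
        FreeAbelianGroup.of (k, m₂)) = 0 :=
    ncMk_eq_zero.2 (AddSubgroup.subset_closure (Or.inl <| Or.inr ⟨k, m₁, m₂, rfl⟩))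
  rw [map_sub, map_sub, sub_sub, sub_eq_zero] at this
  exact this

theorem tm_smul (r : R) (k : K) (m : M) : tm R (op r • k) m = tm R k (r • m) := by
  have : ncMk R (FreeAbelianGroup.of (op r • k, m) - FreeAbelianGroup.of (k, r • m)) = 0 :=
    ncMk_eq_zero.2 (AddSubgroup.subset_closure (Or.inr ⟨r, k, m, rfl⟩))
  rw [map_sub, sub_eq_zero] at this
  exact this

variable (R) in
def tmL (k : K) : M →+ NCTensor R K M := AddMonoidHom.mk' (tm R k) (tm_add_right k)

variable (R) in
def tmR (m : M) : K →+ NCTensor R K M :=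
  AddMonoidHom.mk' (fun k => tm R k m) (fun a b => tm_add_left a b m)

theorem tm_sum_right {ι : Type*} (s : Finset ι) (k : K) (f : ι → M) :
    tm R k (∑ i ∈ s, f i) = ∑ i ∈ s, tm R k (f i) := map_sum (tmL R k) f s

theorem tm_sum_left {ι : Type*} (s : Finset ι) (f : ι → K) (m : M) :
    tm R (∑ i ∈ s, f i) m = ∑ i ∈ s, tm R (f i) m := map_sum (tmR R m) f s

theorem tm_zero_right (k : K) : tm R k (0 : M) = 0 := map_zero (tmL R k)

theorem nc_ext {A : Type*} [AddCommGroup A] {f g : NCTensor R K M →+ A}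
    (h : ∀ k m, f (tm R k m) = g (tm R k m)) : f = g := by
  have : f.comp (ncMk R) = g.comp (ncMk R) := by
    ext ⟨k, m⟩
    exact h k m
  ext z
  obtain ⟨z, rfl⟩ := ncMk_surj z
  exact DFunLike.congr_fun this z

variable (R) in
def ncLift {A : Type*} [AddCommGroup A] (φ : K → M → A)
    (h1 : ∀ k₁ k₂ m, φ (k₁ + k₂) m = φ k₁ m + φ k₂ m)
    (h2 : ∀ k m₁ m₂, φ k (m₁ + m₂) = φ k m₁ + φ k m₂)
    (h3 : ∀ (r : R) k m, φ (op r • k) m = φ k (r • m)) : NCTensor R K M →+ A :=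
  QuotientAddGroup.lift (TensorRels R K M) (FreeAbelianGroup.lift fun p : K × M => φ p.1 p.2) (by
    refine (AddSubgroup.closure_le _).2 ?_
    rintro x ((⟨k₁, k₂, m, rfl⟩ | ⟨k, m₁, m₂, rfl⟩) | ⟨r, k, m, rfl⟩)
    · simp [h1]
    · simp [h2]
    · simp [h3])

theorem ncLift_tm {A : Type*} [AddCommGroup A] (φ : K → M → A) (h1 h2 h3) (k : K) (m : M) :
    ncLift R φ h1 h2 h3 (tm R k m) = φ k m :=
  FreeAbelianGroup.lift_apply_of (fun p : K × M => φ p.1 p.2) (k, m)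

theorem tensorCongr_mk {K' M' : Type u} [AddCommGroup K'] [Module Rᵐᵒᵖ K'] [AddCommGroup M']
    [Module R M'] (μ : K →ₗ[Rᵐᵒᵖ] K') (ν : M →ₗ[R] M') (x : FreeAbelianGroup (K × M)) :
    tensorCongr R μ ν (ncMk R x) =
      ncMk R (FreeAbelianGroup.lift (fun p : K × M => FreeAbelianGroup.of (μ p.1, ν p.2)) x) :=
  rfl

theorem tensorCongr_tm {K' M' : Type u} [AddCommGroup K'] [Module Rᵐᵒᵖ K'] [AddCommGroup M']
    [Module R M'] (μ : K →ₗ[Rᵐᵒᵖ] K') (ν : M →ₗ[R] M') (k : K) (m : M) :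
    tensorCongr R μ ν (tm R k m) = tm R (μ k) (ν m) := by
  rw [tm, tensorCongr_mk, FreeAbelianGroup.lift_apply_of]
  rfl

theorem flat_relation {E : Type u} [AddCommGroup E] [Module R E] (hE : ModFlat R E) {m n : ℕ}
    (a : Fin n → Fin m → R) (v : Fin m → R) (hv : ∀ x, mulR a x = 0 → dotL x v = 0)
    (e : Fin m → E) (he : ∀ i, ∑ j, a i j • e j = 0) : ∑ j, v j • e j = 0 := by
  let A := mulR a
  let Q := (Fin m → R) ⧸ LinearMap.ker A
  let μ : Q →ₗ[Rᵐᵒᵖ] (Fin n → R) := (LinearMap.ker A).liftQ A le_rfl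
  have hμ : Injective μ := LinearMap.ker_eq_bot.1 (Submodule.ker_liftQ_eq_bot _ _ _ le_rfl)
  let V : Q →ₗ[Rᵐᵒᵖ] R := (LinearMap.ker A).liftQ (dotR v) (fun x hx => hv x hx)
  let Φ : NCTensor R Q E →+ E := ncLift R (fun q e => V q • e)
    (fun k₁ k₂ m => by simp [add_smul]) (fun k m₁ m₂ => by simp)
    (fun r k m => by simp [mul_smul])
  let ε : Fin m → Q := fun j => Submodule.Quotient.mk (Pi.single j 1)
  have hz : ∑ j, tm R (ε j) (e j) = 0 := by
    apply hE Q (Fin n → R) μ hμ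
    rw [map_zero, map_sum]
    have : ∀ j, tensorCongr R μ (LinearMap.id : E →ₗ[R] E) (tm R (ε j) (e j)) =
        ∑ i, tm R (Pi.single i 1 : Fin n → R) (a i j • e j) := by
      intro j
      rw [tensorCongr_tm]
      have h1 : μ (ε j) = ∑ i, op (a i j) • (Pi.single i 1 : Fin n → R) := by
        change A (Pi.single j 1) = _
        conv_lhs => rw [right_expand (A (Pi.single j 1))]
        simp [A, mulR, dotR, Pi.single_apply]
      rw [h1, tm_sum_left]
      exact Finset.sum_congr rfl fun i _ => tm_smul _ _ _
    rw [Finset.sum_congr rfl fun j _ => this j, Finset.sum_comm]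
    refine Finset.sum_eq_zero fun i _ => ?_
    rw [← tm_sum_right, he, tm_zero_right]
  have h2 := congrArg Φ hz
  rw [map_sum, map_zero] at h2
  rw [← h2]
  refine Finset.sum_congr rfl fun j _ => ?_
  rw [ncLift_tm]
  congr 1
  change v j = dotR v (Pi.single j 1)
  simp [dotR, Pi.single_apply]

variable (R K) in
def psi (n : ℕ) : NCTensor R K (Fin n → R) →+ (Fin n → K) :=
  ncLift R (fun k y i => op (y i) • k) (fun k₁ k₂ m => by funext i; simp)
    (fun k m₁ m₂ => by funext i; simp [add_smul]) (fun r k m => by funext i; simp [mul_smul])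

theorem psi_inj (n : ℕ) : Injective (psi R K n) := by
  let σ : (Fin n → K) →+ NCTensor R K (Fin n → R) :=
    ∑ i, (tmR R (Pi.single i 1 : Fin n → R)).comp (Pi.evalAddMonoidHom _ i)
  have : σ.comp (psi R K n) = AddMonoidHom.id _ := by
    apply nc_ext
    intro k y
    have h1 : psi R K n (tm R k y) = fun i => op (y i) • k := ncLift_tm _ _ _ _ _ _
    simp only [AddMonoidHom.comp_apply, h1, AddMonoidHom.id_apply]
    simp only [σ, AddMonoidHom.finsetSum_apply, AddMonoidHom.comp_apply,
      Pi.evalAddMonoidHom_apply]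
    conv_rhs => rw [left_expand y, tm_sum_right]
    exact Finset.sum_congr rfl fun i _ => tm_smul _ _ _
  intro x y hxy
  have h2 := congrArg σ hxy
  rw [← AddMonoidHom.comp_apply, ← AddMonoidHom.comp_apply, this] at h2
  exact h2

theorem free_flat (n : ℕ) : ModFlat R (Fin n → R) := by
  intro K L _ _ _ _ μ hμ
  have key : ∀ z, psi R L n (tensorCongr R μ LinearMap.id z) = fun i => μ (psi R K n z i) := by
    intro z
    have : (psi R L n).comp (tensorCongr R μ LinearMap.id) =
        (AddMonoidHom.compLeft μ.toAddMonoidHom (Fin n)).comp (psi R K n) := by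
      apply nc_ext
      intro k y
      simp only [AddMonoidHom.comp_apply]
      rw [tensorCongr_tm]
      unfold psi
      rw [ncLift_tm, ncLift_tm]
      funext i
      simp
    exact DFunLike.congr_fun this z
  intro x y hxy
  apply psi_inj
  funext i
  apply hμ
  have := congrArg (psi R L n) hxy
  rw [key, key] at this
  exact congrFun this i

/-- `h` is linear on the submodule `N` -/
def LinOn (N : Submodule R M) (h : M → X) : Prop :=
  (∀ x ∈ N, ∀ y ∈ N, h (x + y) = h x + h y) ∧ ∀ (r : R), ∀ x ∈ N, h (r • x) = r • h x

variable (R K) in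
def TT (h : M → X) : FreeAbelianGroup (K × M) →+ NCTensor R K X :=
  FreeAbelianGroup.lift fun p => tm R p.1 (h p.2)

theorem TT_of (h : M → X) (k : K) (m : M) :
    TT R K h (FreeAbelianGroup.of (k, m)) = tm R k (h m) :=
  FreeAbelianGroup.lift_apply_of _ _

theorem TT_rel (x : FreeAbelianGroup (K × M)) (hx : x ∈ TensorRels R K M) :
    ∃ N₀ : Submodule R M, N₀.FG ∧ ∀ N, N₀ ≤ N → ∀ (n : ℕ) (h : M → Fin n → R), LinOn N h → TT R K h x = 0 := by
  induction hx using AddSubgroup.closure_induction with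
  | mem x hx =>
    rcases hx with ((⟨k₁, k₂, m, rfl⟩ | ⟨k, m₁, m₂, rfl⟩) | ⟨r, k, m, rfl⟩)
    · refine ⟨⊥, Submodule.fg_bot, fun N _ n h hh => ?_⟩
      simp [TT_of, tm_add_left]
    · refine ⟨Submodule.span R {m₁, m₂}, Submodule.fg_span (by simp), fun N hN n h hh => ?_⟩
      have e1 : m₁ ∈ N := hN (Submodule.subset_span (by simp))
      have e2 : m₂ ∈ N := hN (Submodule.subset_span (by simp))
      simp [TT_of, hh.1 _ e1 _ e2, tm_add_right]
    · refine ⟨Submodule.span R {m}, Submodule.fg_span (by simp), fun N hN n h hh => ?_⟩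
      have e1 : m ∈ N := hN (Submodule.subset_span (by simp))
      simp [TT_of, hh.2 _ _ e1, tm_smul]
  | zero => exact ⟨⊥, Submodule.fg_bot, fun N _ n h hh => map_zero _⟩
  | add x y _ _ hx hy =>
    obtain ⟨N₁, f1, h1⟩ := hx
    obtain ⟨N₂, f2, h2⟩ := hy
    refine ⟨N₁ ⊔ N₂, f1.sup f2, fun N hN n h hh => ?_⟩
    rw [map_add, h1 N (le_sup_left.trans hN) n h hh, h2 N (le_sup_right.trans hN) n h hh, add_zero]
  | neg x _ hx =>
    obtain ⟨N₁, f1, h1⟩ := hx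
    exact ⟨N₁, f1, fun N hN n h hh => by rw [map_neg, h1 N hN n h hh, neg_zero]⟩

theorem TT_back (x : FreeAbelianGroup (K × M)) :
    ∃ N₀ : Submodule R M, N₀.FG ∧ ∀ N, N₀ ≤ N → ∀ (n : ℕ) (h : M → Fin n → R)
      (r : (Fin n → R) →ₗ[R] M),
      (∀ y ∈ N, r (h y) = y) → tensorCongr R (LinearMap.id : K →ₗ[Rᵐᵒᵖ] K) r (TT R K h x) =
        ncMk R x := by
  induction x using FreeAbelianGroup.induction_on with
  | zero => exact ⟨⊥, Submodule.fg_bot, fun N _ n h r hh => by simp⟩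
  | of p =>
    obtain ⟨k, m⟩ := p
    refine ⟨Submodule.span R {m}, Submodule.fg_span (by simp), fun N hN n h r hh => ?_⟩
    rw [TT_of, tensorCongr_tm, hh m (hN (Submodule.subset_span (by simp)))]
    rfl
  | neg p hp =>
    obtain ⟨N₁, f1, h1⟩ := hp
    exact ⟨N₁, f1, fun N hN n h r hh => by rw [map_neg, map_neg, map_neg, h1 N hN n h r hh]⟩
  | add x y hx hy =>
    obtain ⟨N₁, f1, h1⟩ := hx
    obtain ⟨N₂, f2, h2⟩ := hy
    refine ⟨N₁ ⊔ N₂, f1.sup f2, fun N hN n h r hh => ?_⟩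
    rw [map_add, map_add, map_add, h1 N (le_sup_left.trans hN) n h r hh,
      h2 N (le_sup_right.trans hN) n h r hh]

theorem flat_of_factor {E : Type u} [AddCommGroup E] [Module R E]
    (H : ∀ N : Submodule R E, N.FG → ∃ (n : ℕ) (h : N →ₗ[R] (Fin n → R))
      (r : (Fin n → R) →ₗ[R] E), ∀ x, r (h x) = x) : ModFlat R E := by
  classical
  intro K L _ _ _ _ μ hμ
  rw [injective_iff_map_eq_zero]
  intro z hz
  obtain ⟨z, rfl⟩ := ncMk_surj z
  rw [tensorCongr_mk, ncMk_eq_zero] at hz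
  obtain ⟨N₁, f1, h1⟩ := TT_rel _ hz
  obtain ⟨N₂, f2, h2⟩ := TT_back (R := R) z
  obtain ⟨n, h, r, hr⟩ := H (N₁ ⊔ N₂) (f1.sup f2)
  let h' : E → Fin n → R := fun e => if he : e ∈ N₁ ⊔ N₂ then h ⟨e, he⟩ else 0
  have hh : ∀ e (he : e ∈ N₁ ⊔ N₂), h' e = h ⟨e, he⟩ := fun e he => dif_pos he
  have hlin : LinOn (N₁ ⊔ N₂) h' := by
    refine ⟨fun x hx y hy => ?_, fun r x hx => ?_⟩
    · rw [hh x hx, hh y hy, hh _ (add_mem hx hy), ← map_add]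
      rfl
    · rw [hh x hx, hh _ (Submodule.smul_mem _ r hx), ← map_smul]
      rfl
  have e1 := h1 _ le_sup_left n h' hlin
  rw [← h2 _ le_sup_right n h' r (fun y hy => by rw [hh y hy, hr])]
  have e2 : (tensorCongr R μ LinearMap.id).comp (TT R K h') =
      (TT R L h').comp (FreeAbelianGroup.lift
        (fun p : K × E => FreeAbelianGroup.of (μ p.1, (LinearMap.id : E →ₗ[R] E) p.2))) := by
    ext ⟨k, e⟩
    simp only [AddMonoidHom.comp_apply]
    rw [FreeAbelianGroup.lift_apply_of, TT_of, TT_of, tensorCongr_tm]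
    rfl
  have e3 := DFunLike.congr_fun e2 z
  simp only [AddMonoidHom.comp_apply] at e3
  rw [e1] at e3
  have e4 : TT R K h' z = 0 := free_flat n K L μ hμ (e3.trans (map_zero _).symm)
  rw [e4, map_zero]

end Tensor

section Hull

variable {R : Type u} [Ring R]

theorem exists_inj (R : Type u) [Ring R] : ∃ (J : Type u) (_ : AddCommGroup J) (_ : Module R J)
    (i : R →ₗ[R] J), Injective i ∧ Module.Injective R J := by
  let X := ModuleCat.of R R
  let J : ModuleCat.{u} R := CategoryTheory.Injective.under X
  refine ⟨J, inferInstance, inferInstance, (CategoryTheory.Injective.ι X).hom, ?_, ?_⟩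
  · exact (ModuleCat.mono_iff_injective (CategoryTheory.Injective.ι X)).1 inferInstance
  · have : CategoryTheory.Injective (ModuleCat.of R J) :=
      inferInstanceAs (CategoryTheory.Injective (CategoryTheory.Injective.under X))
    exact Module.injective_module_of_injective_object R J

theorem exists_hull (R : Type u) [Ring R] : ∃ (E : Type u) (_ : AddCommGroup E) (_ : Module R E)
    (i : R →ₗ[R] E), Injective i ∧ Module.Injective R E ∧
      EssentialSub R (LinearMap.range i) := by
  obtain ⟨J, _, _, i, hi, hJ⟩ := exists_inj R
  let 𝒮 : Set (Submodule R J) := {E | ∀ x ∈ E, x ≠ 0 → ∃ r : R, r • x ≠ 0 ∧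
    r • x ∈ LinearMap.range i}
  obtain ⟨E, hRE, hE⟩ := zorn_le_nonempty₀ 𝒮 (by
    intro c hc hchain y hy
    refine ⟨sSup c, ?_, fun z hz => le_sSup hz⟩
    intro x hx
    obtain ⟨W, hW, hxW⟩ := (Submodule.mem_sSup_of_directed ⟨y, hy⟩ hchain.directedOn).1 hx
    exact hc hW x hxW) (LinearMap.range i) (by
    intro x hx h0
    exact ⟨1, by simpa using h0, by simpa using hx⟩)
  let 𝒞 : Set (Submodule R J) := {C | ∀ x ∈ C, x ∈ E → x = 0}
  obtain ⟨C, -, hC⟩ := zorn_le_nonempty₀ 𝒞 (by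
    intro c hc hchain y hy
    refine ⟨sSup c, ?_, fun z hz => le_sSup hz⟩
    intro x hx
    obtain ⟨W, hW, hxW⟩ := (Submodule.mem_sSup_of_directed ⟨y, hy⟩ hchain.directedOn).1 hx
    exact hc hW x hxW) ⊥ (by
    intro x hx _
    simpa using hx)
  have key : ∀ x, x ∉ C → ∃ r : R, ∃ c ∈ C, c + r • x ∈ E ∧ c + r • x ≠ 0 := by
    intro x hx
    by_contra! hcon
    apply hx
    have h1 : C ⊔ Submodule.span R {x} ∈ 𝒞 := by
      intro y hy hyE
      obtain ⟨c, hc, w, hw, rfl⟩ := Submodule.mem_sup.1 hy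
      obtain ⟨r, rfl⟩ := Submodule.mem_span_singleton.1 hw
      exact hcon r c hc hyE
    exact hC.2 h1 le_sup_left (Submodule.mem_sup_right (Submodule.mem_span_singleton_self x))
  obtain ⟨ψ, hψ⟩ := hJ.out (C.mkQ ∘ₗ E.subtype) (by
    rw [injective_iff_map_eq_zero]
    rintro ⟨x, hx⟩ h
    have h' : x ∈ C := by simpa using h
    exact Subtype.ext (hC.1 x h' hx)) E.subtype
  have hψ' : ∀ x ∈ E, ψ (C.mkQ x) = x := fun x hx => hψ ⟨x, hx⟩
  have hmk : ∀ c ∈ C, ∀ y, C.mkQ (c + y) = C.mkQ y := by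
    intro c hc y
    rw [map_add, Submodule.mkQ_apply C c, (Submodule.Quotient.mk_eq_zero C).2 hc, zero_add]
  have hrange : LinearMap.range ψ ∈ 𝒮 := by
    rintro _ ⟨q, rfl⟩ h0
    obtain ⟨x, rfl⟩ := C.mkQ_surjective q
    have hx : x ∉ C := by
      intro hx
      apply h0
      rw [Submodule.mkQ_apply, (Submodule.Quotient.mk_eq_zero C).2 hx, map_zero]
    obtain ⟨r, c, hc, he, hne⟩ := key x hx
    obtain ⟨s, hs, hs'⟩ := hE.1 _ he hne
    have : r • ψ (C.mkQ x) = c + r • x := by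
      rw [← map_smul, ← map_smul, ← hmk c hc, hψ' _ he]
    exact ⟨s * r, by rwa [mul_smul, this], by rwa [mul_smul, this]⟩
  have hle : LinearMap.range ψ ≤ E := hE.2 hrange fun x hx => ⟨C.mkQ x, hψ' x hx⟩
  let ρ : J →ₗ[R] E := (ψ ∘ₗ C.mkQ).codRestrict E fun x => hle ⟨_, rfl⟩
  have hρ : ∀ x : E, ρ x = x := fun x => Subtype.ext (hψ' x x.2)
  refine ⟨E, inferInstance, inferInstance, i.codRestrict E fun x => hRE ⟨x, rfl⟩, ?_, ?_, ?_⟩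
  · intro x y h
    exact hi (congrArg Subtype.val h)
  · refine ⟨fun X Y _ _ _ _ f hf g => ?_⟩
    obtain ⟨h, hh⟩ := hJ.out f hf (E.subtype ∘ₗ g)
    refine ⟨ρ ∘ₗ h, fun x => ?_⟩
    rw [LinearMap.comp_apply, hh]
    exact hρ _
  · intro P hP hbot
    obtain ⟨x, hx, hx0⟩ := (Submodule.ne_bot_iff P).1 hP
    obtain ⟨r, hr, t, ht⟩ := hE.1 x.1 x.2 (fun h => hx0 (Subtype.ext h))
    have h1 : r • x ∈ LinearMap.range (i.codRestrict E fun x => hRE ⟨x, rfl⟩) ⊓ P :=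
      ⟨⟨t, Subtype.ext ht⟩, P.smul_mem r hx⟩
    rw [hbot, Submodule.mem_bot] at h1
    exact hr (congrArg Subtype.val h1)

theorem matT_of_flat (hk : LeftKasch R) {E : Type u} [AddCommGroup E] [Module R E]
    (i : R →ₗ[R] E) (hi : Injective i) (hE : Module.Injective R E) (hf : ModFlat R E) :
    MatT R := by
  intro m n a v hv
  by_contra hc
  set K := Submodule.span R (Set.range a) with hK
  let x := K.mkQ v
  have hx : x ≠ 0 := by simpa [x] using hc
  let C := Submodule.span R {x}
  let x' : C := ⟨x, Submodule.mem_span_singleton_self x⟩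
  have hgen : ∀ y : C, ∃ r : R, r • x' = y := by
    rintro ⟨y, hy⟩
    obtain ⟨r, hr⟩ := Submodule.mem_span_singleton.1 hy
    exact ⟨r, Subtype.ext hr⟩
  obtain ⟨f, hf0⟩ := hk C ⟨x', by
    rw [eq_top_iff]
    intro y _
    obtain ⟨r, rfl⟩ := hgen y
    exact Submodule.smul_mem _ _ (Submodule.mem_span_singleton_self _)⟩
    ⟨x', 0, fun h => hx (congrArg Subtype.val h)⟩
  have hfx : f x' ≠ 0 := by
    intro h
    apply hf0
    refine LinearMap.ext fun y => ?_
    obtain ⟨r, rfl⟩ := hgen y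
    simp [h]
  obtain ⟨g, hg⟩ := hE.out C.subtype C.injective_subtype (i ∘ₗ f)
  have hgx : g x = i (f x') := hg x'
  have h1 := flat_relation hf a v hv (fun j => (g ∘ₗ K.mkQ) (Pi.single j 1)) (fun k => by
    rw [← left_lin (g ∘ₗ K.mkQ) (a k), LinearMap.comp_apply, Submodule.mkQ_apply,
      (Submodule.Quotient.mk_eq_zero K).2 (Submodule.subset_span ⟨k, rfl⟩), map_zero])
  rw [← left_lin (g ∘ₗ K.mkQ) v] at h1
  apply hfx
  apply hi
  rw [map_zero, ← hgx]
  exact h1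

theorem flat_of_fgf (H : LeftFGF R) {E : Type u} [AddCommGroup E] [Module R E]
    (hE : Module.Injective R E) : ModFlat R E := by
  apply flat_of_factor
  intro N hN
  have hfin : Module.Finite R N := Module.Finite.iff_fg.2 hN
  obtain ⟨n, f, hf⟩ := fin_embed hfin (H N hfin)
  obtain ⟨r, hr⟩ := hE.out f hf N.subtype
  exact ⟨n, f, r, hr⟩

end Hull


/-- Proposition 2.11: characterizations of left FGF-rings among two-sided coherent rings. -/
theorem stmt_13 (R : Type u) [Ring R] (hl : LeftCoherent R) (hr : RightCoherent R) :
    List.TFAE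
      [LeftFGF R,
       IsNoetherianRing R ∧ IsFPCogenerator R R,
       IsNoetherianRing R ∧ FPInjective Rᵐᵒᵖ R,
       IsNoetherianRing R ∧ LeftKasch R ∧
         ∀ (E : Type u) [AddCommGroup E] [Module R E] (i : R →ₗ[R] E),
           Injective i → Module.Injective R E → EssentialSub R (LinearMap.range i) →
             ModFlat R E] := by
  tfae_have 1 → 2 := fun H => ⟨noeth_of_fgf hl H, cogen_of_fgf H⟩
  tfae_have 2 → 1 := fun H => fgf_of_matT H.1 hr (matT_of_fpcogen R H.2)
  tfae_have 2 → 3 := fun H => ⟨H.1, fpinj_of_matT (matT_of_fpcogen R H.2)⟩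
  tfae_have 3 → 2 := fun H => ⟨H.1, fpcogen_of_matT (matT_of_fpinj H.2)⟩
  tfae_have 1 → 4 := fun H => ⟨noeth_of_fgf hl H,
    kasch_of_cogen (noeth_of_fgf hl H) (cogen_of_fgf H),
    fun E _ _ _ _ hE _ => flat_of_fgf H hE⟩
  tfae_have 4 → 2 := by
    rintro ⟨hn, hk, hE⟩
    obtain ⟨E, _, _, i, hi, hinj, hess⟩ := exists_hull R
    exact ⟨hn, fpcogen_of_matT (matT_of_flat hk i hi hinj (hE E i hi hinj hess))⟩
  tfae_finish
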